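/- arXiv:2002.09795 — 6 statements merged into one kernel-verified Lean document; each statement's English description precedes it below -/
import Mathlib

section
/- Let Q_0, Q_1, …, Q_T : Ω → (S×A → ℝ) be random functions and ε_1, …, ε_T ≥ 0 be such that 𝔼[‖Q_k − 𝒯Q_{k−1}‖₂²] ≤ ε_k for every k ∈ {1,…,T}. Then 𝔼[‖Q_T − Q*‖_∞] ≤ Σ_{k=1}^{T} γ^{T−k}·√(ε_k) + γ^T · 𝔼[‖Q_0 − Q*‖_∞]. -/
open MeasureTheory ProbabilityTheory Finset

/-- sup norm of a real function on a finite nonempty type. -/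
noncomputable def supNorm {ι : Type*} [Fintype ι] [Nonempty ι] (f : ι → ℝ) : ℝ :=
  Finset.univ.sup' Finset.univ_nonempty (fun i => |f i|)

/-- squared Euclidean norm of a real function on a finite type. -/
def sqNorm {ι : Type*} [Fintype ι] (f : ι → ℝ) : ℝ := ∑ i, (f i) ^ 2

/-- Bellman optimality operator. -/
noncomputable def bellman {S A : Type*} [Fintype S] [Fintype A] [Nonempty A]
    (P : S → A → S → ℝ) (r : S → A → ℝ) (γ : ℝ) (Q : S × A → ℝ) : S × A → ℝ :=
  fun x => r x.1 x.2 + γ * ∑ s' : S, P x.1 x.2 s' *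
    Finset.univ.sup' Finset.univ_nonempty (fun a' => Q (s', a'))

lemma abs_le_supNorm {ι : Type*} [Fintype ι] [Nonempty ι] (f : ι → ℝ) (i : ι) :
    |f i| ≤ supNorm f :=
  Finset.le_sup' (fun i => |f i|) (Finset.mem_univ i)

lemma bellman_contr {S A : Type*} [Fintype S] [Fintype A] [Nonempty S] [Nonempty A]
    (P : S → A → S → ℝ) (hP0 : ∀ s a s', 0 ≤ P s a s') (hP1 : ∀ s a, ∑ s', P s a s' = 1)
    (r : S → A → ℝ) (γ : ℝ) (hγ : 0 < γ) (Q R : S × A → ℝ) (x : S × A) :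
    bellman P r γ Q x - bellman P r γ R x ≤ γ * supNorm (fun y => Q y - R y) := by
  have h : ∑ s' : S, P x.1 x.2 s' * Finset.univ.sup' Finset.univ_nonempty (fun a' => Q (s', a'))
      ≤ ∑ s' : S, P x.1 x.2 s' *
        (Finset.univ.sup' Finset.univ_nonempty (fun a' => R (s', a'))
          + supNorm (fun y => Q y - R y)) := by
    refine Finset.sum_le_sum fun s' _ => mul_le_mul_of_nonneg_left ?_ (hP0 _ _ _)
    refine Finset.sup'_le _ _ fun a _ => ?_
    have h1 := (le_abs_self _).trans (abs_le_supNorm (fun y => Q y - R y) (s', a))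
    have h2 := Finset.le_sup' (fun a' => R (s', a')) (Finset.mem_univ a)
    linarith
  simp only [mul_add, Finset.sum_add_distrib, ← Finset.sum_mul, hP1, one_mul] at h
  have := mul_le_mul_of_nonneg_left h hγ.le
  unfold bellman
  linarith

lemma supNorm_sub_comm {ι : Type*} [Fintype ι] [Nonempty ι] (f g : ι → ℝ) :
    supNorm (fun y => f y - g y) = supNorm (fun y => g y - f y) := by
  unfold supNorm
  simp only [abs_sub_comm]

lemma step_bound {S A : Type*} [Fintype S] [Fintype A] [Nonempty S] [Nonempty A]
    (P : S → A → S → ℝ) (hP0 : ∀ s a s', 0 ≤ P s a s') (hP1 : ∀ s a, ∑ s', P s a s' = 1)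
    (r : S → A → ℝ) (γ : ℝ) (hγ : 0 < γ) (Qstar : S × A → ℝ)
    (hQstar : bellman P r γ Qstar = Qstar) (Q R : S × A → ℝ) (c : ℝ) (hc : 0 < c) :
    supNorm (fun x => Q x - Qstar x) ≤ γ * supNorm (fun x => R x - Qstar x)
      + (sqNorm (fun x => Q x - bellman P r γ R x) / c + c) / 2 := by
  refine Finset.sup'_le _ _ fun x _ => ?_
  have h1 := bellman_contr P hP0 hP1 r γ hγ R Qstar x
  have h2 := bellman_contr P hP0 hP1 r γ hγ Qstar R x
  rw [supNorm_sub_comm Qstar R] at h2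
  rw [hQstar] at h1 h2
  have h3 : (Q x - bellman P r γ R x) ^ 2 ≤ sqNorm (fun x => Q x - bellman P r γ R x) :=
    Finset.single_le_sum (f := fun x => (Q x - bellman P r γ R x) ^ 2)
      (fun i _ => sq_nonneg _) (Finset.mem_univ x)
  have h4 : |Q x - bellman P r γ R x|
      ≤ (sqNorm (fun x => Q x - bellman P r γ R x) / c + c) / 2 := by
    have : 2 * |Q x - bellman P r γ R x| - c ≤ sqNorm (fun x => Q x - bellman P r γ R x) / c := by
      rw [le_div_iff₀ hc]
      nlinarith [sq_abs (Q x - bellman P r γ R x), sq_nonneg (|Q x - bellman P r γ R x| - c)]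
    linarith
  have h5 := abs_le.1 h4
  rw [abs_le]
  constructor <;> linarith [h5.1, h5.2]

theorem outer_iteration_convergence
    {S A : Type*} [Fintype S] [Fintype A] [Nonempty S] [Nonempty A]
    {Ω : Type*} [MeasurableSpace Ω] (μ : Measure Ω) [IsProbabilityMeasure μ]
    (P : S → A → S → ℝ) (hP0 : ∀ s a s', 0 ≤ P s a s') (hP1 : ∀ s a, ∑ s', P s a s' = 1)
    (r : S → A → ℝ) (hr : ∀ s a, |r s a| ≤ 1)
    (γ : ℝ) (hγ : γ ∈ Set.Ioo (0 : ℝ) 1)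
    (Qstar : S × A → ℝ) (hQstar : bellman P r γ Qstar = Qstar)
    (T : ℕ) (Q : ℕ → Ω → S × A → ℝ) (hQmeas : ∀ k, Measurable (Q k))
    (ε : ℕ → ℝ) (hε0 : ∀ k ∈ Finset.Icc 1 T, 0 ≤ ε k)
    (hmomInt : ∀ k ∈ Finset.Icc 1 T,
      Integrable (fun ω => sqNorm (fun x => Q k ω x - bellman P r γ (Q (k - 1) ω) x)) μ)
    (hmom : ∀ k ∈ Finset.Icc 1 T,
      ∫ ω, sqNorm (fun x => Q k ω x - bellman P r γ (Q (k - 1) ω) x) ∂μ ≤ ε k)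
    (hint : ∀ k, Integrable (fun ω => supNorm (fun x => Q k ω x - Qstar x)) μ) :
    ∫ ω, supNorm (fun x => Q T ω x - Qstar x) ∂μ ≤
      (∑ k ∈ Finset.Icc 1 T, γ ^ (T - k) * Real.sqrt (ε k))
        + γ ^ T * ∫ ω, supNorm (fun x => Q 0 ω x - Qstar x) ∂μ := by
  obtain ⟨hγ0, hγ1⟩ := hγ
  have step : ∀ k ∈ Finset.Icc 1 T, ∫ ω, supNorm (fun x => Q k ω x - Qstar x) ∂μ ≤
      γ * ∫ ω, supNorm (fun x => Q (k - 1) ω x - Qstar x) ∂μ + Real.sqrt (ε k) := by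
    intro k hk
    have key : ∀ c : ℝ, 0 < c → ∫ ω, supNorm (fun x => Q k ω x - Qstar x) ∂μ ≤
        γ * ∫ ω, supNorm (fun x => Q (k - 1) ω x - Qstar x) ∂μ + (ε k / c + c) / 2 := by
      intro c hc
      have i1 := (hint (k - 1)).const_mul γ
      have i2 := (((hmomInt k hk).div_const c).add (integrable_const c)).div_const 2
      have h := integral_mono (hint k) (i1.add i2) (fun ω =>
        step_bound P hP0 hP1 r γ hγ0 Qstar hQstar (Q k ω) (Q (k - 1) ω) c hc)
      rw [integral_add' i1 i2, integral_const_mul, integral_div,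
        integral_add' ((hmomInt k hk).div_const c) (integrable_const c), integral_div] at h
      simp only [integral_const, probReal_univ, one_smul] at h
      have := div_le_div_of_nonneg_right (hmom k hk) hc.le
      linarith
    set D := ∫ ω, supNorm (fun x => Q k ω x - Qstar x) ∂μ -
      γ * ∫ ω, supNorm (fun x => Q (k - 1) ω x - Qstar x) ∂μ with hD
    suffices D ≤ Real.sqrt (ε k) by linarith
    rcases le_or_gt D 0 with h | h
    · exact h.trans (Real.sqrt_nonneg _)
    · apply Real.le_sqrt_of_sq_le
      have h1 := key D h
      have h2 : D ≤ ε k / D := by linarith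
      rw [le_div_iff₀ h] at h2
      nlinarith
  have main : ∀ n, n ≤ T → ∫ ω, supNorm (fun x => Q n ω x - Qstar x) ∂μ ≤
      (∑ k ∈ Finset.Icc 1 n, γ ^ (n - k) * Real.sqrt (ε k))
        + γ ^ n * ∫ ω, supNorm (fun x => Q 0 ω x - Qstar x) ∂μ := by
    intro n
    induction n with
    | zero => intro _; simp
    | succ n ih =>
      intro hn
      have h1 := step (n + 1) (Finset.mem_Icc.2 ⟨by omega, hn⟩)
      have h2 := mul_le_mul_of_nonneg_left (ih (by omega)) hγ0.le
      rw [Finset.sum_Icc_succ_top (by omega)]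
      have h3 : ∑ k ∈ Finset.Icc 1 n, γ ^ (n + 1 - k) * Real.sqrt (ε k)
          = γ * ∑ k ∈ Finset.Icc 1 n, γ ^ (n - k) * Real.sqrt (ε k) := by
        rw [Finset.mul_sum]
        refine Finset.sum_congr rfl fun k hk => ?_
        rw [Nat.sub_add_comm (Finset.mem_Icc.1 hk).2, pow_succ]
        ring
      rw [h3]
      simp only [Nat.add_sub_cancel, Nat.sub_self, pow_zero, one_mul] at h1 ⊢
      rw [pow_succ]
      linarith
  exact main T le_rfl
end

section
/- The second moment of the stochastic gradient at the optimum satisfies σ² := Σ_{(s,a,s')} d(s,a)·P s a s' · ‖g(Q*; Q*, (s,a,s'))‖₂² ≤ 9·|S|·|A|/(1−γ)². -/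
open MeasureTheory ProbabilityTheory Finset

/-- Stochastic gradient for sample `(s,a,s')`: zero except at coordinate `(s,a)`,
where it takes the value `Q(s,a) - r(s,a) - γ·max_{a'} Qk(s',a')`. -/
noncomputable def sgrad {S A : Type*} [Fintype A] [Nonempty A] [DecidableEq S] [DecidableEq A]
    (r : S → A → ℝ) (γ : ℝ) (Q Qk : S × A → ℝ) (smp : S × A × S) : S × A → ℝ :=
  fun x => if x = (smp.1, smp.2.1) then
      Q (smp.1, smp.2.1) - r smp.1 smp.2.1
        - γ * Finset.univ.sup' Finset.univ_nonempty (fun a' => Qk (smp.2.2, a'))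
    else 0

/-- squared `D`-weighted norm. -/
def DnormSq {S A : Type*} [Fintype S] [Fintype A] (d : S × A → ℝ) (f : S × A → ℝ) : ℝ :=
  ∑ x, d x * (f x) ^ 2

theorem abs_sup_le_aux {S A : Type*} [Fintype A] [Nonempty A] (Q : S × A → ℝ) (M : ℝ)
    (h : ∀ x, |Q x| ≤ M) (s : S) :
    |Finset.univ.sup' Finset.univ_nonempty (fun a' => Q (s, a'))| ≤ M := by
  obtain ⟨a, _, ha⟩ := Finset.exists_mem_eq_sup' (Finset.univ_nonempty (α := A))
    (fun a' => Q (s, a'))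
  rw [ha]
  exact h _

theorem Qstar_bound_aux {S A : Type*} [Fintype S] [Fintype A] [Nonempty S] [Nonempty A]
    (P : S → A → S → ℝ) (hP0 : ∀ s a s', 0 ≤ P s a s') (hP1 : ∀ s a, ∑ s', P s a s' = 1)
    (r : S → A → ℝ) (hr : ∀ s a, |r s a| ≤ 1)
    (γ : ℝ) (hγ : γ ∈ Set.Ioo (0 : ℝ) 1)
    (Q : S × A → ℝ) (hQ : bellman P r γ Q = Q) (x : S × A) : |Q x| ≤ 1 / (1 - γ) := by
  obtain ⟨h0, h1⟩ := hγ
  obtain ⟨y, hy⟩ := Finite.exists_max (fun x => |Q x|)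
  refine (hy x).trans ?_
  have hs : |∑ s' : S, P y.1 y.2 s' *
      Finset.univ.sup' Finset.univ_nonempty (fun a' => Q (s', a'))| ≤ |Q y| := by
    refine (Finset.abs_sum_le_sum_abs _ _).trans ?_
    calc _ ≤ ∑ s' : S, P y.1 y.2 s' * |Q y| := by
          refine Finset.sum_le_sum fun s' _ => ?_
          rw [abs_mul, abs_of_nonneg (hP0 _ _ _)]
          exact mul_le_mul_of_nonneg_left (abs_sup_le_aux Q _ hy s') (hP0 _ _ _)
      _ = |Q y| := by rw [← Finset.sum_mul, hP1, one_mul]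
  have h2 : |Q y| ≤ 1 + γ * |Q y| := by
    conv_lhs => rw [← hQ]
    unfold bellman
    refine (abs_add_le _ _).trans (add_le_add (hr _ _) ?_)
    rw [abs_mul, abs_of_pos h0]
    exact mul_le_mul_of_nonneg_left hs h0.le
  rw [le_div_iff₀ (by linarith)]
  linarith

theorem sgrad_variance_at_optimum_bound
    {S A : Type*} [Fintype S] [Fintype A] [Nonempty S] [Nonempty A]
    [DecidableEq S] [DecidableEq A]
    (P : S → A → S → ℝ) (hP0 : ∀ s a s', 0 ≤ P s a s') (hP1 : ∀ s a, ∑ s', P s a s' = 1)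
    (r : S → A → ℝ) (hr : ∀ s a, |r s a| ≤ 1)
    (γ : ℝ) (hγ : γ ∈ Set.Ioo (0 : ℝ) 1)
    (Qstar : S × A → ℝ) (hQstar : bellman P r γ Qstar = Qstar)
    (d : S × A → ℝ) (hd0 : ∀ x, 0 < d x) (hd1 : ∑ x, d x = 1) :
    ∑ smp : S × A × S, d (smp.1, smp.2.1) * P smp.1 smp.2.1 smp.2.2 *
        sqNorm (sgrad r γ Qstar Qstar smp) ≤
      9 * (Fintype.card S : ℝ) * (Fintype.card A : ℝ) / (1 - γ) ^ 2 := by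
  have hQ := Qstar_bound_aux P hP0 hP1 r hr γ hγ Qstar hQstar
  obtain ⟨h0, h1⟩ := hγ
  have hB : 1 / (1 - γ) = 1 + γ * (1 / (1 - γ)) := by
    have : 1 - γ ≠ 0 := by linarith
    field_simp
    ring
  have hB2 : 9 * (Fintype.card S : ℝ) * (Fintype.card A : ℝ) / (1 - γ) ^ 2
      = 9 * ((Fintype.card S : ℝ) * (Fintype.card A : ℝ)) * (1 / (1 - γ)) ^ 2 := by
    rw [div_pow, one_pow, mul_one_div, mul_assoc]
  rw [hB2]
  generalize 1 / (1 - γ) = B at *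
  have hg : ∀ smp : S × A × S, sqNorm (sgrad r γ Qstar Qstar smp) ≤ 4 * B ^ 2 := by
    intro smp
    have e : sqNorm (sgrad r γ Qstar Qstar smp) = (Qstar (smp.1, smp.2.1) - r smp.1 smp.2.1
        - γ * Finset.univ.sup' Finset.univ_nonempty (fun a' => Qstar (smp.2.2, a'))) ^ 2 := by
      unfold sqNorm sgrad
      simp [ite_pow]
    rw [e]
    have a1 := abs_le.1 (hQ (smp.1, smp.2.1))
    have a2 := abs_le.1 (hr smp.1 smp.2.1)
    have a3 := abs_le.1 (abs_sup_le_aux Qstar B hQ smp.2.2)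
    have a4 := mul_le_mul_of_nonneg_left a3.1 h0.le
    have a5 := mul_le_mul_of_nonneg_left a3.2 h0.le
    have : (4 : ℝ) * B ^ 2 = (2 * B) ^ 2 := by ring
    rw [this]
    apply sq_le_sq'
    · linarith
    · linarith
  calc _ ≤ ∑ smp : S × A × S, d (smp.1, smp.2.1) * P smp.1 smp.2.1 smp.2.2 * (4 * B ^ 2) :=
        Finset.sum_le_sum fun smp _ => mul_le_mul_of_nonneg_left (hg smp)
          (mul_nonneg (hd0 _).le (hP0 _ _ _))
    _ = 4 * B ^ 2 := by
        rw [← Finset.sum_mul]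
        have : ∑ smp : S × A × S, d (smp.1, smp.2.1) * P smp.1 smp.2.1 smp.2.2 = 1 := by
          simp only [Fintype.sum_prod_type, ← Finset.mul_sum, hP1, mul_one]
          rw [← hd1, Fintype.sum_prod_type]
        rw [this, one_mul]
    _ ≤ _ := by
        have c1 : (1 : ℝ) ≤ Fintype.card S := by exact_mod_cast Fintype.card_pos
        have c2 : (1 : ℝ) ≤ Fintype.card A := by exact_mod_cast Fintype.card_pos
        have c3 := one_le_mul_of_one_le_of_one_le c1 c2
        exact mul_le_mul_of_nonneg_right (by linarith) (sq_nonneg B)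
end

section
/- For all functions Q, Q_k : S×A → ℝ, one has Σ_{(s,a,s')} d(s,a)·P s a s' · ‖g(Q; Q_k, (s,a,s'))‖₂² ≤ 4γ²·|S|·‖Q_k − Q*‖_∞² + 4·‖Q − Q*‖_D² + 2σ², where σ² := Σ_{(s,a,s')} d(s,a)·P s a s' · ‖g(Q*; Q*, (s,a,s'))‖₂². -/
open MeasureTheory ProbabilityTheory Finset

theorem sqNorm_sgrad_aux {S A : Type*} [Fintype S] [Fintype A] [Nonempty A]
    [DecidableEq S] [DecidableEq A]
    (r : S → A → ℝ) (γ : ℝ) (Q Qk : S × A → ℝ) (smp : S × A × S) :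
    sqNorm (sgrad r γ Q Qk smp) = (Q (smp.1, smp.2.1) - r smp.1 smp.2.1
        - γ * Finset.univ.sup' Finset.univ_nonempty (fun a' => Qk (smp.2.2, a'))) ^ 2 := by
  unfold sqNorm
  rw [Finset.sum_eq_single (smp.1, smp.2.1)]
  · simp [sgrad]
  · intro b _ hb
    simp [sgrad, hb]
  · simp

theorem sup_diff_aux {S A : Type*} [Fintype S] [Fintype A] [Nonempty S] [Nonempty A]
    (U V : S × A → ℝ) (M : ℝ) (h : ∀ x, U x - V x ≤ M) (s : S) :
    Finset.univ.sup' Finset.univ_nonempty (fun a' => U (s, a'))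
      - Finset.univ.sup' Finset.univ_nonempty (fun a' => V (s, a')) ≤ M := by
  rw [sub_le_iff_le_add]
  apply Finset.sup'_le
  intro a _
  have h1 := Finset.le_sup' (fun a' => V (s, a')) (Finset.mem_univ a)
  have h2 := h (s, a)
  linarith

theorem sgrad_second_moment_decomposition
    {S A : Type*} [Fintype S] [Fintype A] [Nonempty S] [Nonempty A]
    [DecidableEq S] [DecidableEq A]
    (P : S → A → S → ℝ) (hP0 : ∀ s a s', 0 ≤ P s a s') (hP1 : ∀ s a, ∑ s', P s a s' = 1)
    (r : S → A → ℝ) (hr : ∀ s a, |r s a| ≤ 1)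
    (γ : ℝ) (hγ : γ ∈ Set.Ioo (0 : ℝ) 1)
    (Qstar : S × A → ℝ) (hQstar : bellman P r γ Qstar = Qstar)
    (d : S × A → ℝ) (hd0 : ∀ x, 0 < d x) (hd1 : ∑ x, d x = 1)
    (Q Qk : S × A → ℝ) :
    ∑ smp : S × A × S, d (smp.1, smp.2.1) * P smp.1 smp.2.1 smp.2.2 *
        sqNorm (sgrad r γ Q Qk smp) ≤
      4 * γ ^ 2 * (Fintype.card S : ℝ) * (supNorm (fun x => Qk x - Qstar x)) ^ 2
        + 4 * DnormSq d (fun x => Q x - Qstar x)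
        + 2 * ∑ smp : S × A × S, d (smp.1, smp.2.1) * P smp.1 smp.2.1 smp.2.2 *
            sqNorm (sgrad r γ Qstar Qstar smp) := by
  set M := supNorm (fun x => Qk x - Qstar x) with hM
  have hMx : ∀ x, |Qk x - Qstar x| ≤ M := fun x =>
    Finset.le_sup' (fun x => |Qk x - Qstar x|) (Finset.mem_univ x)
  have key : ∀ smp : S × A × S, d (smp.1, smp.2.1) * P smp.1 smp.2.1 smp.2.2 *
        sqNorm (sgrad r γ Q Qk smp) ≤
      d (smp.1, smp.2.1) * P smp.1 smp.2.1 smp.2.2 * (4 * γ ^ 2 * M ^ 2)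
      + d (smp.1, smp.2.1) * P smp.1 smp.2.1 smp.2.2 *
          (4 * (Q (smp.1, smp.2.1) - Qstar (smp.1, smp.2.1)) ^ 2)
      + 2 * (d (smp.1, smp.2.1) * P smp.1 smp.2.1 smp.2.2 *
          sqNorm (sgrad r γ Qstar Qstar smp)) := by
    rintro ⟨s, a, t⟩
    rw [sqNorm_sgrad_aux, sqNorm_sgrad_aux]
    simp only
    have h1 := sup_diff_aux Qk Qstar M (fun x => (abs_le.1 (hMx x)).2) t
    have h2 := sup_diff_aux Qstar Qk M (fun x => by linarith [(abs_le.1 (hMx x)).1]) t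
    generalize Finset.univ.sup' Finset.univ_nonempty (fun a' => Qk (t, a')) = p at *
    generalize Finset.univ.sup' Finset.univ_nonempty (fun a' => Qstar (t, a')) = q at *
    have hw : 0 ≤ d (s, a) * P s a t := mul_nonneg (hd0 _).le (hP0 _ _ _)
    have h3 : (p - q) ^ 2 ≤ M ^ 2 := sq_le_sq' (by linarith) h1
    have h4 : γ ^ 2 * (p - q) ^ 2 ≤ γ ^ 2 * M ^ 2 :=
      mul_le_mul_of_nonneg_left h3 (sq_nonneg γ)
    have h5 : (Q (s, a) - r s a - γ * p) ^ 2 ≤ 4 * γ ^ 2 * M ^ 2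
        + 4 * (Q (s, a) - Qstar (s, a)) ^ 2 + 2 * (Qstar (s, a) - r s a - γ * q) ^ 2 := by
      nlinarith [sq_nonneg ((Q (s, a) - Qstar (s, a)) - γ * (p - q)
          - (Qstar (s, a) - r s a - γ * q)),
        sq_nonneg ((Q (s, a) - Qstar (s, a)) + γ * (p - q))]
    have h6 := mul_le_mul_of_nonneg_left h5 hw
    linarith
  have hsum : ∀ f : S × A → ℝ, ∑ smp : S × A × S,
      d (smp.1, smp.2.1) * P smp.1 smp.2.1 smp.2.2 * f (smp.1, smp.2.1) =
      ∑ x, d x * f x := by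
    intro f
    simp only [Fintype.sum_prod_type]
    refine Finset.sum_congr rfl fun s _ => Finset.sum_congr rfl fun a _ => ?_
    rw [← Finset.sum_mul, ← Finset.mul_sum, hP1, mul_one]
  refine (Finset.sum_le_sum fun smp _ => key smp).trans ?_
  rw [Finset.sum_add_distrib, Finset.sum_add_distrib, ← Finset.mul_sum,
    hsum (fun _ => 4 * γ ^ 2 * M ^ 2), hsum (fun x => 4 * (Q x - Qstar x) ^ 2),
    ← Finset.sum_mul, hd1, one_mul]
  have hD : ∑ x, d x * (4 * (Q x - Qstar x) ^ 2) = 4 * DnormSq d (fun x => Q x - Qstar x) := by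
    unfold DnormSq
    rw [Finset.mul_sum]
    exact Finset.sum_congr rfl fun x _ => by ring
  rw [hD]
  have hc : (1 : ℝ) ≤ Fintype.card S := by exact_mod_cast Fintype.card_pos
  have h7 : 0 ≤ 4 * γ ^ 2 * M ^ 2 := by positivity
  have h8 := mul_le_mul_of_nonneg_left hc h7
  linarith
end

section
/- Let Q, Q_k : S×A → ℝ and let β be a step size with 0 < β ≤ c/(8L). Then the expected one-step SGD progress satisfies Σ_{(s,a,s')} d(s,a)·P s a s' · ‖𝒯Q_k − (Q − β·g(Q; Q_k, (s,a,s')))‖_D² ≤ (1 − cβ)·‖𝒯Q_k − Q‖_D² + 12·|S|·|A|·γ²·L·β²·‖Q* − Q_k‖_∞² + 18·|S|·|A|·L·β²/(1−γ)². -/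
open MeasureTheory ProbabilityTheory Finset

lemma abs_sup_le {A : Type*} [Fintype A] [Nonempty A] (f : A → ℝ) (B : ℝ)
    (h : ∀ a, |f a| ≤ B) : |Finset.univ.sup' Finset.univ_nonempty f| ≤ B := by
  obtain ⟨a, -, ha⟩ := Finset.exists_mem_eq_sup' (Finset.univ_nonempty (α := A)) f
  rw [ha]; exact h a

lemma qstar_bound {S A : Type*} [Fintype S] [Fintype A] [Nonempty S] [Nonempty A]
    (P : S → A → S → ℝ) (hP0 : ∀ s a s', 0 ≤ P s a s') (hP1 : ∀ s a, ∑ s', P s a s' = 1)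
    (r : S → A → ℝ) (hr : ∀ s a, |r s a| ≤ 1)
    (γ : ℝ) (hγ : γ ∈ Set.Ioo (0 : ℝ) 1)
    (Qstar : S × A → ℝ) (hQstar : bellman P r γ Qstar = Qstar) :
    supNorm Qstar ≤ 1 / (1 - γ) := by
  obtain ⟨h0, h1⟩ := hγ
  have key : supNorm Qstar ≤ 1 + γ * supNorm Qstar := by
    apply Finset.sup'_le
    intro x _
    have hx := congrFun hQstar x
    rw [← hx]
    unfold bellman
    refine (abs_add_le _ _).trans (add_le_add (hr _ _) ?_)
    rw [abs_mul, abs_of_pos h0]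
    refine mul_le_mul_of_nonneg_left ?_ h0.le
    refine (Finset.abs_sum_le_sum_abs _ _).trans ?_
    calc _ ≤ ∑ s', P x.1 x.2 s' * supNorm Qstar := by
          refine Finset.sum_le_sum fun s' _ => ?_
          rw [abs_mul, abs_of_nonneg (hP0 _ _ _)]
          exact mul_le_mul_of_nonneg_left
            (abs_sup_le _ _ fun a => abs_le_supNorm Qstar (s', a)) (hP0 _ _ _)
      _ = supNorm Qstar := by rw [← Finset.sum_mul, hP1, one_mul]
  rw [le_div_iff₀ (by linarith)]
  linarith

lemma inner_bound {S : Type*} [Fintype S] (p V : S → ℝ) (hp0 : ∀ s, 0 ≤ p s)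
    (hp1 : ∑ s, p s = 1) (M : ℝ) (hV : ∀ s, |V s| ≤ M) (E D e r q γ β : ℝ)
    (he : e = r + γ * ∑ s, p s * V s - q) (hD : 0 ≤ D) (hβ0 : 0 < β) (hβ1 : β ≤ 1) :
    ∑ s, p s * (E + D * ((e + β * (q - r - γ * V s)) ^ 2 - e ^ 2)) ≤
      E + D * (-β * e ^ 2 + β ^ 2 * γ ^ 2 * M ^ 2) := by
  set m := ∑ s, p s * V s with hm
  have h2 : ∑ s, p s * V s ^ 2 ≤ M ^ 2 := by
    calc _ ≤ ∑ s, p s * M ^ 2 := by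
          refine Finset.sum_le_sum fun s _ => mul_le_mul_of_nonneg_left ?_ (hp0 s)
          exact sq_le_sq' (abs_le.1 (hV s)).1 (abs_le.1 (hV s)).2
      _ = M ^ 2 := by rw [← Finset.sum_mul, hp1, one_mul]
  clear_value m
  have hq : q = r + γ * m - e := by linarith
  have expand : ∑ s, p s * (E + D * ((e + β * (q - r - γ * V s)) ^ 2 - e ^ 2)) =
      (E + D * ((e * (1 - β) + β * γ * m) ^ 2 - e ^ 2)) * ∑ s, p s
      - 2 * D * (e * (1 - β) + β * γ * m) * β * γ * ∑ s, p s * V s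
      + D * β ^ 2 * γ ^ 2 * ∑ s, p s * V s ^ 2 := by
    rw [Finset.mul_sum, Finset.mul_sum, Finset.mul_sum, ← Finset.sum_sub_distrib,
      ← Finset.sum_add_distrib]
    refine Finset.sum_congr rfl fun s _ => ?_
    rw [hq]; ring
  rw [expand, hp1, ← hm]
  have h3 := mul_le_mul_of_nonneg_left h2 (show 0 ≤ D * β ^ 2 * γ ^ 2 by positivity)
  have h4 : 0 ≤ D * e ^ 2 * (β * (1 - β)) :=
    mul_nonneg (by positivity) (mul_nonneg hβ0.le (by linarith))
  have h5 : 0 ≤ D * (β * γ * m) ^ 2 := by positivity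
  nlinarith

theorem sgd_one_step_progress
    {S A : Type*} [Fintype S] [Fintype A] [Nonempty S] [Nonempty A]
    [DecidableEq S] [DecidableEq A]
    (P : S → A → S → ℝ) (hP0 : ∀ s a s', 0 ≤ P s a s') (hP1 : ∀ s a, ∑ s', P s a s' = 1)
    (r : S → A → ℝ) (hr : ∀ s a, |r s a| ≤ 1)
    (γ : ℝ) (hγ : γ ∈ Set.Ioo (0 : ℝ) 1)
    (Qstar : S × A → ℝ) (hQstar : bellman P r γ Qstar = Qstar)
    (d : S × A → ℝ) (hd0 : ∀ x, 0 < d x) (hd1 : ∑ x, d x = 1)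
    (c L : ℝ) (hc : c = Finset.univ.inf' Finset.univ_nonempty d)
    (hL : L = Finset.univ.sup' Finset.univ_nonempty d)
    (Q Qk : S × A → ℝ) (β : ℝ) (hβ0 : 0 < β) (hβ : β ≤ c / (8 * L)) :
    ∑ smp : S × A × S, d (smp.1, smp.2.1) * P smp.1 smp.2.1 smp.2.2 *
        DnormSq d (fun x => bellman P r γ Qk x - (Q x - β * sgrad r γ Q Qk smp x)) ≤
      (1 - c * β) * DnormSq d (fun x => bellman P r γ Qk x - Q x)
        + 12 * (Fintype.card S : ℝ) * (Fintype.card A : ℝ) * γ ^ 2 * L * β ^ 2 *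
            (supNorm (fun x => Qstar x - Qk x)) ^ 2
        + 18 * (Fintype.card S : ℝ) * (Fintype.card A : ℝ) * L * β ^ 2 / (1 - γ) ^ 2 := by
  have hγ' := hγ
  obtain ⟨h0, h1⟩ := hγ'
  have hcd : ∀ x, c ≤ d x := fun x => hc ▸ Finset.inf'_le d (Finset.mem_univ x)
  have hdL : ∀ x, d x ≤ L := fun x => hL ▸ Finset.le_sup' d (Finset.mem_univ x)
  obtain ⟨x0⟩ : Nonempty (S × A) := inferInstance
  have hLpos : 0 < L := (hd0 x0).trans_le (hdL x0)
  have hβ1 : β ≤ 1 := by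
    refine hβ.trans ?_
    rw [div_le_one (by positivity)]
    linarith [hcd x0, hdL x0]
  set Δ := supNorm (fun x => Qstar x - Qk x) with hΔ
  set V : S → ℝ := fun s' => Finset.univ.sup' Finset.univ_nonempty (fun a' => Qk (s', a')) with hVdef
  set M := Δ + 1 / (1 - γ) with hM
  have hV : ∀ s, |V s| ≤ M := by
    intro s
    refine abs_sup_le _ _ fun a => ?_
    have a1 := abs_le_supNorm (fun x => Qstar x - Qk x) (s, a)
    have a2 := (abs_le_supNorm Qstar (s, a)).trans (qstar_bound P hP0 hP1 r hr γ hγ Qstar hQstar)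
    simp only [← hΔ] at a1
    rw [abs_le] at *
    constructor <;> linarith [a1.1, a1.2, a2.1, a2.2]
  set e : S × A → ℝ := fun x => bellman P r γ Qk x - Q x with he
  set E := DnormSq d e with hE
  have hsmp : ∀ s a s', DnormSq d
      (fun x => bellman P r γ Qk x - (Q x - β * sgrad r γ Q Qk (s, a, s') x)) =
      E + d (s, a) * ((e (s, a) + β * (Q (s, a) - r s a - γ * V s')) ^ 2 - e (s, a) ^ 2) := by
    intro s a s'
    rw [← sub_eq_iff_eq_add', hE]
    unfold DnormSq
    rw [← Finset.sum_sub_distrib, Finset.sum_eq_single (s, a)]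
    · simp only [sgrad, he, hVdef, if_true]; ring
    · intro b _ hb
      simp only [sgrad, he, if_neg hb]; ring
    · simp
  have hsum : ∑ smp : S × A × S, d (smp.1, smp.2.1) * P smp.1 smp.2.1 smp.2.2 *
        DnormSq d (fun x => bellman P r γ Qk x - (Q x - β * sgrad r γ Q Qk smp x)) ≤
      ∑ x : S × A, d x * (E + d x * (-β * e x ^ 2 + β ^ 2 * γ ^ 2 * M ^ 2)) := by
    rw [Fintype.sum_prod_type, Fintype.sum_prod_type]
    refine Finset.sum_le_sum fun s _ => ?_
    rw [Fintype.sum_prod_type]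
    refine Finset.sum_le_sum fun a _ => ?_
    simp only [hsmp, mul_assoc (d (s, a)) (P _ _ _)]
    rw [← Finset.mul_sum]
    refine mul_le_mul_of_nonneg_left ?_ (hd0 _).le
    exact inner_bound (P s a) V (hP0 s a) (hP1 s a) M hV E (d (s, a)) (e (s, a)) (r s a)
      (Q (s, a)) γ β rfl (hd0 _).le hβ0 hβ1
  have hsum2 : ∑ x : S × A, d x * (E + d x * (-β * e x ^ 2 + β ^ 2 * γ ^ 2 * M ^ 2)) ≤
      E - c * β * E + L * (β ^ 2 * γ ^ 2 * M ^ 2) := by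
    calc _ ≤ ∑ x : S × A, (d x * E - c * β * (d x * e x ^ 2)
            + d x * (L * (β ^ 2 * γ ^ 2 * M ^ 2))) := by
          refine Finset.sum_le_sum fun x _ => ?_
          have b1 := mul_le_mul_of_nonneg_left (hcd x)
            (show 0 ≤ β * (d x * e x ^ 2) from
              mul_nonneg hβ0.le (mul_nonneg (hd0 x).le (sq_nonneg _)))
          have b2 := mul_le_mul_of_nonneg_left (hdL x)
            (show 0 ≤ d x * (β ^ 2 * γ ^ 2 * M ^ 2) from mul_nonneg (hd0 x).le (by positivity))
          linarith
      _ = _ := by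
          rw [Finset.sum_add_distrib, Finset.sum_sub_distrib, ← Finset.sum_mul, ← Finset.sum_mul,
            ← Finset.mul_sum, hd1, hE]
          unfold DnormSq
          ring
  refine (hsum.trans hsum2).trans ?_
  have hK : (1 : ℝ) ≤ (Fintype.card S : ℝ) * (Fintype.card A : ℝ) := by
    exact_mod_cast Nat.mul_pos (Fintype.card_pos (α := S)) (Fintype.card_pos (α := A))
  set K := (Fintype.card S : ℝ) * (Fintype.card A : ℝ) with hKdef
  set u := 1 / (1 - γ) with hu
  have t : 18 * (Fintype.card S : ℝ) * (Fintype.card A : ℝ) * L * β ^ 2 / (1 - γ) ^ 2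
      = K * (18 * (L * β ^ 2 * u ^ 2)) := by
    rw [hKdef, hu, div_pow, one_pow, div_eq_mul_one_div]; ring
  have t2 : 12 * (Fintype.card S : ℝ) * (Fintype.card A : ℝ) * γ ^ 2 * L * β ^ 2 * Δ ^ 2
      = K * (12 * (L * β ^ 2 * (γ ^ 2 * Δ ^ 2))) := by
    rw [hKdef]; ring
  rw [t, t2]
  have hX : 0 ≤ L * β ^ 2 * u ^ 2 := by positivity
  have hY : 0 ≤ L * β ^ 2 * (γ ^ 2 * Δ ^ 2) := by positivity
  have c1 := mul_le_mul_of_nonneg_right hK (show 0 ≤ 18 * (L * β ^ 2 * u ^ 2) by positivity)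
  have c2 := mul_le_mul_of_nonneg_right hK
    (show 0 ≤ 12 * (L * β ^ 2 * (γ ^ 2 * Δ ^ 2)) by positivity)
  have hg : γ ^ 2 ≤ 1 := by nlinarith
  have hM2 : γ ^ 2 * M ^ 2 ≤ 2 * (γ ^ 2 * Δ ^ 2) + 2 * u ^ 2 := by
    have := mul_le_mul_of_nonneg_right hg (sq_nonneg u)
    have := mul_nonneg (sq_nonneg γ) (sq_nonneg (Δ - u))
    rw [hM]; nlinarith
  have c3 := mul_le_mul_of_nonneg_left hM2 (show 0 ≤ L * β ^ 2 by positivity)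
  nlinarith
end

section
/- Let c > 0, β = 2/c, λ ≥ 2, C ≥ 0, and let (a_t)_{t≥0} be a sequence of nonnegative reals satisfying a_{t+1} ≤ (1 − cβ/(λ+t))·a_t + β²C/(λ+t)² for all t ≥ 0. Then a_t ≤ max{λ·a_0, β²C}/(λ+t) for all t ≥ 0. -/
theorem sgd_rate_recursion (c β lam C : ℝ) (hc : 0 < c) (hβ : β = 2 / c)
    (hlam : 2 ≤ lam) (hC : 0 ≤ C)
    (a : ℕ → ℝ) (ha0 : ∀ t, 0 ≤ a t)
    (hrec : ∀ t : ℕ, a (t + 1) ≤ (1 - c * β / (lam + t)) * a t + β ^ 2 * C / (lam + t) ^ 2) :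
    ∀ t : ℕ, a t ≤ max (lam * a 0) (β ^ 2 * C) / (lam + t) := by
  have hcb : c * β = 2 := by rw [hβ]; field_simp
  have h1 := le_max_left (lam * a 0) (β ^ 2 * C)
  have h2 := le_max_right (lam * a 0) (β ^ 2 * C)
  have hM : 0 ≤ max (lam * a 0) (β ^ 2 * C) := le_trans (by positivity) h2
  generalize max (lam * a 0) (β ^ 2 * C) = M at *
  intro t
  induction t with
  | zero =>
    rw [le_div_iff₀ (by push_cast; linarith)]
    push_cast
    linarith
  | succ t ih =>
    have hr := hrec t
    rw [hcb] at hr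
    have hs : 2 ≤ lam + (t : ℝ) := by
      have : (0 : ℝ) ≤ t := Nat.cast_nonneg t
      linarith
    push_cast
    rw [← add_assoc]
    generalize lam + (t : ℝ) = s at *
    have hs0 : 0 < s := by linarith
    have hk : 0 ≤ 1 - 2 / s := by
      rw [sub_nonneg, div_le_one hs0]; exact hs
    calc a (t + 1) ≤ (1 - 2 / s) * a t + β ^ 2 * C / s ^ 2 := hr
      _ ≤ (1 - 2 / s) * (M / s) + M / s ^ 2 := by gcongr
      _ = M * (s - 1) / s ^ 2 := by field_simp; ring
      _ ≤ M / (s + 1) := by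
        rw [div_le_div_iff₀ (by positivity) (by positivity)]
        nlinarith
end

section
/- Let ε ∈ (0,1]. Let Q_0, Q_1, …, Q_T : Ω → (S×A → ℝ) be random functions such that ‖Q_0 − Q*‖_∞ ≤ 2/(1−γ) almost surely, 𝔼[‖Q_i − 𝒯Q_{i−1}‖₂²] ≤ ε²·(1−γ)²/4 for every i ∈ {1,…,T}, and T ≥ ln(4/((1−γ)·ε))/ln(1/γ). Then 𝔼[‖Q_T − Q*‖_∞] ≤ ε. -/
open MeasureTheory ProbabilityTheory Finset

lemma supNorm_le {ι : Type*} [Fintype ι] [Nonempty ι] (f : ι → ℝ) (c : ℝ)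
    (h : ∀ i, |f i| ≤ c) : supNorm f ≤ c :=
  Finset.sup'_le _ _ (fun i _ => h i)

lemma supNorm_le_sq {ι : Type*} [Fintype ι] [Nonempty ι] (f : ι → ℝ) (c : ℝ) (hc : 0 < c)
    (i : ι) : |f i| ≤ (sqNorm f / c + c) / 2 := by
  have h1 : (f i) ^ 2 ≤ sqNorm f :=
    Finset.single_le_sum (f := fun i => (f i) ^ 2) (fun j _ => sq_nonneg (f j))
      (Finset.mem_univ i)
  have h2 : 2 * |f i| - c ≤ sqNorm f / c := by
    rw [le_div_iff₀ hc]
    nlinarith [sq_nonneg (|f i| - c), sq_abs (f i)]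
  linarith

lemma max_le_max_add {S A : Type*} [Fintype S] [Fintype A] [Nonempty S] [Nonempty A]
    (Q R : S × A → ℝ) (d : ℝ) (h : ∀ x, Q x ≤ R x + d) (s : S) :
    Finset.univ.sup' Finset.univ_nonempty (fun a' => Q (s, a')) ≤
      Finset.univ.sup' Finset.univ_nonempty (fun a' => R (s, a')) + d := by
  apply Finset.sup'_le
  intro a _
  have := Finset.le_sup' (fun a' => R (s, a')) (Finset.mem_univ a)
  have := h (s, a)
  linarith

lemma bellman_le {S A : Type*} [Fintype S] [Fintype A] [Nonempty S] [Nonempty A]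
    (P : S → A → S → ℝ) (hP0 : ∀ s a s', 0 ≤ P s a s') (hP1 : ∀ s a, ∑ s', P s a s' = 1)
    (r : S → A → ℝ) (γ : ℝ) (hγ : 0 ≤ γ) (Q R : S × A → ℝ) (d : ℝ)
    (h : ∀ x, Q x ≤ R x + d) (x : S × A) :
    bellman P r γ Q x ≤ bellman P r γ R x + γ * d := by
  unfold bellman
  have h1 : ∑ s' : S, P x.1 x.2 s' *
      Finset.univ.sup' Finset.univ_nonempty (fun a' => Q (s', a')) ≤
      ∑ s' : S, P x.1 x.2 s' *
      (Finset.univ.sup' Finset.univ_nonempty (fun a' => R (s', a')) + d) :=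
    Finset.sum_le_sum fun s' _ =>
      mul_le_mul_of_nonneg_left (max_le_max_add Q R d h s') (hP0 _ _ _)
  simp only [mul_add, Finset.sum_add_distrib, ← Finset.sum_mul, hP1, one_mul] at h1
  have := mul_le_mul_of_nonneg_left h1 hγ
  linarith

theorem outer_iteration_accuracy
    {S A : Type*} [Fintype S] [Fintype A] [Nonempty S] [Nonempty A]
    {Ω : Type*} [MeasurableSpace Ω] (μ : Measure Ω) [IsProbabilityMeasure μ]
    (P : S → A → S → ℝ) (hP0 : ∀ s a s', 0 ≤ P s a s') (hP1 : ∀ s a, ∑ s', P s a s' = 1)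
    (r : S → A → ℝ) (hr : ∀ s a, |r s a| ≤ 1)
    (γ : ℝ) (hγ : γ ∈ Set.Ioo (0 : ℝ) 1)
    (Qstar : S × A → ℝ) (hQstar : bellman P r γ Qstar = Qstar)
    (ε : ℝ) (hε : ε ∈ Set.Ioc (0 : ℝ) 1)
    (T : ℕ) (Q : ℕ → Ω → S × A → ℝ) (hQmeas : ∀ k, Measurable (Q k))
    (hQ0 : ∀ᵐ ω ∂μ, supNorm (fun x => Q 0 ω x - Qstar x) ≤ 2 / (1 - γ))
    (hmomInt : ∀ i ∈ Finset.Icc 1 T,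
      Integrable (fun ω => sqNorm (fun x => Q i ω x - bellman P r γ (Q (i - 1) ω) x)) μ)
    (hmom : ∀ i ∈ Finset.Icc 1 T,
      ∫ ω, sqNorm (fun x => Q i ω x - bellman P r γ (Q (i - 1) ω) x) ∂μ ≤
        ε ^ 2 * (1 - γ) ^ 2 / 4)
    (hT : Real.log (4 / ((1 - γ) * ε)) / Real.log (1 / γ) ≤ (T : ℝ))
    (hint : ∀ k, Integrable (fun ω => supNorm (fun x => Q k ω x - Qstar x)) μ) :
    ∫ ω, supNorm (fun x => Q T ω x - Qstar x) ∂μ ≤ ε := by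
  obtain ⟨hγ0, hγ1⟩ := hγ
  obtain ⟨hε0, hε1⟩ := hε
  have h1γ : 0 < 1 - γ := by linarith
  obtain ⟨c, hcdef⟩ : ∃ c, c = ε * (1 - γ) / 2 := ⟨_, rfl⟩
  have hc : 0 < c := by rw [hcdef]; positivity
  have key : ∀ k, k ≤ T → ∫ ω, supNorm (fun x => Q k ω x - Qstar x) ∂μ ≤
      γ ^ k * (2 / (1 - γ)) + ε / 2 := by
    intro k
    induction k with
    | zero =>
      intro _
      have h := integral_mono_ae (hint 0) (integrable_const (2 / (1 - γ))) hQ0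
      simp only [integral_const, probReal_univ, one_smul] at h
      simp only [pow_zero, one_mul]
      linarith
    | succ k ih =>
      intro hk
      have ih := ih (by omega)
      have hmem : k + 1 ∈ Finset.Icc 1 T := Finset.mem_Icc.2 ⟨by omega, hk⟩
      have hI := hmomInt _ hmem
      have hM := hmom _ hmem
      simp only [Nat.add_sub_cancel] at hI hM
      have hpt : ∀ ω, supNorm (fun x => Q (k + 1) ω x - Qstar x) ≤
          γ * supNorm (fun x => Q k ω x - Qstar x) +
          (sqNorm (fun x => Q (k + 1) ω x - bellman P r γ (Q k ω) x) / c + c) / 2 := by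
        intro ω
        apply supNorm_le
        intro x
        have a1 := abs_le.1 (supNorm_le_sq
          (fun x => Q (k + 1) ω x - bellman P r γ (Q k ω) x) c hc x)
        have a2 := bellman_le P hP0 hP1 r γ hγ0.le (Q k ω) Qstar
          (supNorm (fun x => Q k ω x - Qstar x)) (fun y => by
            have := abs_le.1 (abs_le_supNorm (fun x => Q k ω x - Qstar x) y)
            linarith [this.2]) x
        have a3 := bellman_le P hP0 hP1 r γ hγ0.le Qstar (Q k ω)
          (supNorm (fun x => Q k ω x - Qstar x)) (fun y => by
            have := abs_le.1 (abs_le_supNorm (fun x => Q k ω x - Qstar x) y)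
            linarith [this.1]) x
        rw [hQstar] at a2 a3
        rw [abs_le]
        constructor <;> linarith [a1.1, a1.2]
      have i1 : Integrable (fun ω => γ * supNorm (fun x => Q k ω x - Qstar x)) μ :=
        (hint k).const_mul γ
      have i2 : Integrable (fun ω =>
          sqNorm (fun x => Q (k + 1) ω x - bellman P r γ (Q k ω) x) / c) μ := hI.div_const c
      have i3 : Integrable (fun ω =>
          sqNorm (fun x => Q (k + 1) ω x - bellman P r γ (Q k ω) x) / c + c) μ :=
        i2.add (integrable_const c)
      have h := integral_mono (hint (k + 1)) (i1.add (i3.div_const 2)) hpt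
      have e : ∫ ω, (γ * supNorm (fun x => Q k ω x - Qstar x) +
          (sqNorm (fun x => Q (k + 1) ω x - bellman P r γ (Q k ω) x) / c + c) / 2) ∂μ =
          γ * ∫ ω, supNorm (fun x => Q k ω x - Qstar x) ∂μ +
          ((∫ ω, sqNorm (fun x => Q (k + 1) ω x - bellman P r γ (Q k ω) x) ∂μ) / c + c) / 2 := by
        rw [integral_add i1 (i3.div_const 2), integral_const_mul, integral_div,
          integral_add i2 (integrable_const c), integral_div]
        simp
      have h' := h.trans_eq e
      have hM' : (∫ ω, sqNorm (fun x => Q (k + 1) ω x - bellman P r γ (Q k ω) x) ∂μ) / c ≤ c := by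
        rw [div_le_iff₀ hc]
        calc _ ≤ _ := hM
          _ = c * c := by rw [hcdef]; ring
      have := mul_le_mul_of_nonneg_left ih hγ0.le
      calc _ ≤ _ := h'
        _ ≤ γ * (γ ^ k * (2 / (1 - γ)) + ε / 2) + c := by linarith
        _ = _ := by rw [hcdef]; ring
  have hpow : γ ^ T ≤ (1 - γ) * ε / 4 := by
    have hlog : 0 < Real.log (1 / γ) := Real.log_pos (by rw [lt_div_iff₀ hγ0]; linarith)
    rw [div_le_iff₀ hlog] at hT
    rw [← Real.log_le_log_iff (by positivity) (by positivity), Real.log_pow]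
    have e1 : Real.log (1 / γ) = - Real.log γ := by rw [one_div, Real.log_inv]
    have e2 : Real.log (4 / ((1 - γ) * ε)) = - Real.log ((1 - γ) * ε / 4) := by
      rw [← Real.log_inv, inv_div]
    rw [e1, e2] at hT
    linarith
  have h := key T le_rfl
  have h2 : γ ^ T * (2 / (1 - γ)) ≤ (1 - γ) * ε / 4 * (2 / (1 - γ)) :=
    mul_le_mul_of_nonneg_right hpow (by positivity)
  have h3 : (1 - γ) * ε / 4 * (2 / (1 - γ)) = ε / 2 := by
    field_simp
    norm_num
  linarith
end
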